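/- (Converse direction of Theorem 1.) If the fairness-modularity Q^P of the community partition 𝒞 equals 0, then 𝒞 is fair, i.e. |C_u ∩ P_w| / |C_u| = |P_w| / n for every u = 1,…,k and every w = 1,…,r. -/

import Mathlib

open Finset

/-!
Record a set `A` by the vector of the numbers `|A ∩ P w|`, and let `p` be the vector of all of `V`.
Then `2 m^P = ‖p‖²`, and `2 m^P Q^P` is the sum over the communities of the Cauchy–Schwarz defects
`‖x‖² - ⟪p, x⟫² / ‖p‖²` of their vectors `x`. When `Q^P = 0` every defect vanishes, so every `x` is
a multiple of `p`; comparing coordinate sums identifies the factor as `|C u| / |V|`.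
-/

section CauchySchwarz

variable {𝕜 E ι : Type*} [RCLike 𝕜] [NormedAddCommGroup E] [InnerProductSpace 𝕜 E]

theorem norm_inner_sq_div_norm_sq_le (x y : E) : ‖inner 𝕜 y x‖ ^ 2 / ‖y‖ ^ 2 ≤ ‖x‖ ^ 2 := by
  refine div_le_of_le_mul₀ (sq_nonneg _) (sq_nonneg _) ?_
  rw [← mul_pow, mul_comm]
  gcongr
  exact norm_inner_le_norm y x

theorem exists_eq_smul_of_norm_inner_sq_div_norm_sq_eq {x y : E} (hy : y ≠ 0)
    (h : ‖inner 𝕜 y x‖ ^ 2 / ‖y‖ ^ 2 = ‖x‖ ^ 2) : ∃ c : 𝕜, x = c • y := by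
  have h_eq : ‖inner 𝕜 y x‖ = ‖y‖ * ‖x‖ := by
    rw [div_eq_iff (pow_ne_zero 2 (norm_ne_zero_iff.mpr hy)), ← mul_pow, mul_comm] at h
    exact (sq_eq_sq₀ (by positivity) (by positivity)).mp h
  exact Or.resolve_left (((norm_inner_eq_norm_tfae 𝕜 y x).out 0 2).mp h_eq) hy

theorem exists_eq_smul_of_sum_norm_inner_sq_div_norm_sq_eq {s : Finset ι} {x : ι → E} {y : E}
    (hy : y ≠ 0) (h : ∑ i ∈ s, ‖inner 𝕜 y (x i)‖ ^ 2 / ‖y‖ ^ 2 = ∑ i ∈ s, ‖x i‖ ^ 2) :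
    ∀ i ∈ s, ∃ c : 𝕜, x i = c • y := fun i hi ↦
  exists_eq_smul_of_norm_inner_sq_div_norm_sq_eq hy <|
    (sum_eq_sum_iff_of_le fun j _ ↦ norm_inner_sq_div_norm_sq_le (x j) y).mp h i hi

end CauchySchwarz

section FairnessModularity

variable {V ι κ : Type*} [DecidableEq V]

/-- The vector of the numbers of elements of `A` in each of the groups `P w`, as an element of
Euclidean space so that its norm and inner products are the sums in the fairness-modularity. -/
def groupCounts (P : κ → Finset V) (A : Finset V) : EuclideanSpace ℝ κ :=
  WithLp.toLp 2 fun w ↦ (#(A ∩ P w) : ℝ)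

theorem groupCounts_apply (P : κ → Finset V) (A : Finset V) (w : κ) :
    groupCounts P A w = #(A ∩ P w) := rfl

theorem groupCounts_ne_zero {P : κ → Finset V} {A : Finset V} (hA : A.Nonempty)
    (hcover : ∀ v ∈ A, ∃ w, v ∈ P w) : groupCounts P A ≠ 0 := by
  obtain ⟨v, hv⟩ := hA
  obtain ⟨w, hw⟩ := hcover v hv
  have h_pos : (0 : ℝ) < #(A ∩ P w) := by
    exact_mod_cast card_pos.mpr ⟨v, mem_inter.mpr ⟨hv, hw⟩⟩
  intro h_zero
  exact h_pos.ne' (congrArg (· w) h_zero)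

theorem sum_groupCounts [Fintype κ] {P : κ → Finset V}
    (hdisj : Pairwise fun w w' ↦ Disjoint (P w) (P w')) {A : Finset V}
    (hcover : ∀ v ∈ A, ∃ w, v ∈ P w) : ∑ w, groupCounts P A w = #A := by
  have h_union : univ.biUnion (fun w ↦ A ∩ P w) = A := by
    rw [← inter_biUnion, inter_eq_left]
    exact fun v hv ↦ by simpa using hcover v hv
  have h_disj : (↑(univ : Finset κ) : Set κ).PairwiseDisjoint fun w ↦ A ∩ P w :=
    fun w _ w' _ hw ↦ (hdisj hw).mono inter_subset_right inter_subset_right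
  simp only [groupCounts_apply]
  rw [← Nat.cast_sum, ← card_biUnion h_disj, h_union]

theorem card_inter_div_card_eq_of_groupCounts_eq_smul [Finite κ] {P : κ → Finset V}
    (hdisj : Pairwise fun w w' ↦ Disjoint (P w) (P w')) {A B : Finset V} (hA : A.Nonempty)
    (hcoverA : ∀ v ∈ A, ∃ w, v ∈ P w) (hcoverB : ∀ v ∈ B, ∃ w, v ∈ P w) {c : ℝ}
    (h : groupCounts P A = c • groupCounts P B) (w : κ) :
    (#(A ∩ P w) : ℝ) / #A = #(B ∩ P w) / #B := by
  have h_apply (w' : κ) : groupCounts P A w' = c * groupCounts P B w' := by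
    rw [h, PiLp.smul_apply, smul_eq_mul]
  have := Fintype.ofFinite κ
  have h_card : (#A : ℝ) = c * #B := by
    rw [← sum_groupCounts hdisj hcoverA, ← sum_groupCounts hdisj hcoverB, mul_sum]
    exact sum_congr rfl fun w' _ ↦ h_apply w'
  have hc : c ≠ 0 := by
    rintro rfl
    simp [hA.ne_empty] at h_card
  rw [← groupCounts_apply, h_apply, h_card, mul_div_mul_left _ _ hc, groupCounts_apply]

variable [Fintype κ]

theorem norm_groupCounts_sq (P : κ → Finset V) (A : Finset V) :
    ‖groupCounts P A‖ ^ 2 = ∑ w, (#(A ∩ P w) : ℝ) ^ 2 := by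
  simp only [EuclideanSpace.real_norm_sq_eq, groupCounts_apply]

theorem inner_groupCounts (P : κ → Finset V) (A B : Finset V) :
    inner ℝ (groupCounts P A) (groupCounts P B) = ∑ w, (#(B ∩ P w) : ℝ) * #(A ∩ P w) :=
  rfl

/-- The quantity `m^P` normalizing the fairness-modularity: for pairwise disjoint groups, half the
number of ordered pairs of vertices lying in a common group. -/
noncomputable def groupEdgeWeight (P : κ → Finset V) : ℝ :=
  1 / 2 * ∑ w, (#(P w) : ℝ) ^ 2

/-- The fairness-modularity `Q^P` of the communities `C` with respect to the protected groups `P`.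
Both are arbitrary finite families of sets, not necessarily partitions. -/
noncomputable def fairnessModularity [Fintype ι] (C : ι → Finset V) (P : κ → Finset V) : ℝ :=
  1 / (2 * groupEdgeWeight P) *
    ((∑ u, ∑ w, (#(C u ∩ P w) : ℝ) ^ 2)
      - 1 / (2 * groupEdgeWeight P) * ∑ u, (∑ w, (#(C u ∩ P w) : ℝ) * #(P w)) ^ 2)

variable [Fintype V]

theorem two_mul_groupEdgeWeight (P : κ → Finset V) :
    2 * groupEdgeWeight P = ‖groupCounts P univ‖ ^ 2 := by
  simp only [groupEdgeWeight, norm_groupCounts_sq, univ_inter]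
  ring

theorem fairnessModularity_eq_sum_norm_sq_sub [Fintype ι] (C : ι → Finset V)
    (P : κ → Finset V) :
    fairnessModularity C P = 1 / ‖groupCounts P univ‖ ^ 2 *
      (∑ u, ‖groupCounts P (C u)‖ ^ 2 -
        ∑ u, ‖inner ℝ (groupCounts P univ) (groupCounts P (C u))‖ ^ 2 /
          ‖groupCounts P univ‖ ^ 2) := by
  simp only [fairnessModularity, two_mul_groupEdgeWeight, norm_groupCounts_sq, inner_groupCounts,
    univ_inter, Real.norm_eq_abs, sq_abs, ← sum_div, one_div_mul_eq_div]

theorem fair_of_fairness_modularity_eq_zero_general [Fintype ι] {C : ι → Finset V}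
    {P : κ → Finset V} (hCne : ∀ u, (C u).Nonempty)
    (hPdisj : Pairwise fun w w' ↦ Disjoint (P w) (P w')) (hPunion : ∀ v, ∃ w, v ∈ P w)
    (hQ : fairnessModularity C P = 0) (u : ι) (w : κ) :
    (#(C u ∩ P w) : ℝ) / #(C u) = #(P w) / Fintype.card V := by
  have h_univ_ne : groupCounts P univ ≠ 0 :=
    groupCounts_ne_zero ((hCne u).mono (subset_univ _)) fun v _ ↦ hPunion v
  have h_defect : ∑ u, ‖inner ℝ (groupCounts P univ) (groupCounts P (C u))‖ ^ 2 /
      ‖groupCounts P univ‖ ^ 2 = ∑ u, ‖groupCounts P (C u)‖ ^ 2 := by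
    rw [fairnessModularity_eq_sum_norm_sq_sub] at hQ
    have h_norm : 1 / ‖groupCounts P univ‖ ^ 2 ≠ 0 := by positivity
    exact (sub_eq_zero.mp ((mul_eq_zero.mp hQ).resolve_left h_norm)).symm
  obtain ⟨c, hc⟩ :=
    exists_eq_smul_of_sum_norm_inner_sq_div_norm_sq_eq h_univ_ne h_defect u (mem_univ u)
  simpa only [univ_inter, card_univ] using
    card_inter_div_card_eq_of_groupCounts_eq_smul hPdisj (hCne u) (fun v _ ↦ hPunion v)
      (fun v _ ↦ hPunion v) hc w

end FairnessModularity

/-- (Converse direction of Theorem 1.) If Q^P = 0, then the community partition is fair. -/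
theorem fair_of_fairness_modularity_eq_zero
    {V : Type*} [Fintype V] [DecidableEq V]
    (n : ℕ) (hn : Fintype.card V = n) (hn1 : 1 ≤ n)
    (k r : ℕ) (C : Fin k → Finset V) (P : Fin r → Finset V)
    (hCne : ∀ u, (C u).Nonempty)
    (hCdisj : ∀ u u', u ≠ u' → Disjoint (C u) (C u'))
    (hCunion : ∀ v : V, ∃ u, v ∈ C u)
    (hPne : ∀ w, (P w).Nonempty)
    (hPdisj : ∀ w w', w ≠ w' → Disjoint (P w) (P w'))
    (hPunion : ∀ v : V, ∃ w, v ∈ P w)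
    (mP : ℝ) (hmP : mP = (1/2) * ∑ w, ((P w).card : ℝ)^2)
    (QP : ℝ)
    (hQP : QP = (1/(2*mP)) *
      ((∑ u, ∑ w, ((C u ∩ P w).card : ℝ)^2)
        - (1/(2*mP)) * ∑ u, (∑ w, ((C u ∩ P w).card : ℝ) * ((P w).card : ℝ))^2))
    (hQP0 : QP = 0) :
    ∀ u w,
      ((C u ∩ P w).card : ℝ) / ((C u).card : ℝ) = ((P w).card : ℝ) / (n : ℝ) := by
  subst hn hmP hQP
  exact fair_of_fairness_modularity_eq_zero_general hCne (fun w w' ↦ hPdisj w w') hPunion hQP0
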